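/- For every n ≥ 0, the number of nonzero entries on row n of Pascal's triangle modulo 25 satisfies, as an identity in the rational numbers, a_{25}(n) = 2^{|n|_1} · 3^{|n|_2} · 4^{|n|_3} · 5^{|n|_4} · (1 + 2|n|_{10} + (3/4)|n|_{11} + (1/3)|n|_{12} + (1/8)|n|_{13} + (8/3)|n|_{20} + |n|_{21} + (4/9)|n|_{22} + (1/6)|n|_{23} + 3|n|_{30} + (9/8)|n|_{31} + (1/2)|n|_{32} + (3/16)|n|_{33} + (16/5)|n|_{40} + (6/5)|n|_{41} + (8/15)|n|_{42} + (1/5)|n|_{43}), where subword counts are taken in the base-5 representation of n. -/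

import Mathlib

/-- The number of integers `0 ≤ m ≤ n` such that `C(n,m)` is not divisible by `k`,
i.e. the number of nonzero entries on row `n` of Pascal's triangle modulo `k`. -/
def rowCount (k n : ℕ) : ℕ :=
  ((Finset.range (n + 1)).filter fun m => ¬ k ∣ n.choose m).card

/-- The number of borrows when subtracting `m` from `n` in base `b` (for `m ≤ n`):
the number of indices `i ≥ 0` with `m mod b^(i+1) > n mod b^(i+1)`. -/
def borrowCount (b n m : ℕ) : ℕ :=
  ((Finset.range (Nat.digits b n).length).filter fun i => n % b ^ (i + 1) < m % b ^ (i + 1)).card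

/-- `A_n(β)`: the number of `0 ≤ m ≤ n` with exactly `β` borrows
when subtracting `m` from `n` in base `b`. -/
def borrowA (b n β : ℕ) : ℕ :=
  ((Finset.range (n + 1)).filter fun m => borrowCount b n m = β).card

/-- `B_n(β)` with respect to `L` digit positions: the number of `n < m ≤ b^L - 1` such that
exactly `β` of the indices `0 ≤ i ≤ L - 1` satisfy `m mod b^(i+1) > n mod b^(i+1)`. -/
def borrowB (b L n β : ℕ) : ℕ :=
  ((Finset.Ioc n (b ^ L - 1)).filter fun m =>
    ((Finset.range L).filter fun i => n % b ^ (i + 1) < m % b ^ (i + 1)).card = β).card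

/-- The base-`b` digit string of `n`, most significant digit first (empty for `n = 0`). -/
def wordOf (b n : ℕ) : List ℕ := (Nat.digits b n).reverse

/-- `|n|_w`: the number of occurrences of `w` as a contiguous subword of the
base-`b` digit string of `n`. -/
def subwordCount (b n : ℕ) (w : List ℕ) : ℕ :=
  ((Finset.range ((wordOf b n).length + 1 - w.length)).filter fun s =>
    ((wordOf b n).drop s).take w.length = w).card

/-- `c(w_k ⋯ w_0)` for a word `w = [w_k, …, w_0]` (most significant letter first):
`(w_k/(w_k+1)) · (∏_{h=1}^{k−1} (b−w_{k−h})/(w_{k−h}+1)) · (b−w_0−1)/(w_0+1)`. -/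
def cword (b : ℕ) (w : List ℕ) : ℚ :=
  ((w.getD 0 0 : ℚ) / ((w.getD 0 0 : ℚ) + 1)) *
    (∏ h ∈ Finset.Ico 1 (w.length - 1),
      ((b : ℚ) - (w.getD h 0 : ℚ)) / ((w.getD h 0 : ℚ) + 1)) *
    (((b : ℚ) - (w.getD (w.length - 1) 0 : ℚ) - 1) / ((w.getD (w.length - 1) 0 : ℚ) + 1))

/-- The sum `Σ c(v)c(w)⋯c(z)` over all sets of pairwise nonoverlapping contiguous subwords
of `W` (identified by their position intervals: a pair `(s, len)` denotes the subword
occupying positions `s, …, s+len-1`) whose multiset of lengths equals `P`. -/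
def nonoverlapSum (b : ℕ) (W : List ℕ) (P : Multiset ℕ) : ℚ :=
  ∑ S ∈ ((Finset.range W.length ×ˢ Finset.Icc 1 W.length).powerset.filter fun S =>
      Multiset.map Prod.snd S.val = P ∧
      (∀ q ∈ S, q.1 + q.2 ≤ W.length) ∧
      (∀ q ∈ S, ∀ r ∈ S, q ≠ r → q.1 + q.2 ≤ r.1 ∨ r.1 + r.2 ≤ q.1)),
    ∏ q ∈ S, cword b ((W.drop q.1).take q.2)

/-!
Write `n = p q + d` with `p` prime and `d < p`. An entry `C(n, p r + e)` with `e ≤ d` (no borrow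
in the last digit) has the `p`-adic valuation of `C(q, r)`, while for `d < e < p` its valuation is
one more than that of `q C(q - 1, r)`. Counting entries by `e` gives `a_p(n) = (d + 1) a_p(q)`,
hence `a_p(n) = ∏ (x + 1)^|n|_x`, and, with `c = q mod p`,
`a_{p²}(n) = (d + 1) a_{p²}(q) + (p - 1 - d) c / (c + 1) a_p(q)`.
After division by `a_p(n) = (d + 1) a_p(q)`, appending the digit `d` to `q` thus adds
`c / (c + 1) · (p - 1 - d) / (d + 1)`, the weight of the newly created two-letter subword `c d`.
-/

open Finset
open scoped Nat

section Valuation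

variable {p : ℕ} [Fact p.Prime] {d e : ℕ}

lemma padicValNat_factorial_mul_add_digit (q : ℕ) (hd : d < p) :
    padicValNat p (p * q + d)! = padicValNat p q ! + q := by
  rw [padicValNat_factorial_mul_add q hd, padicValNat_factorial_mul]

lemma padicValNat_choose_add_padicValNat_factorial {n m : ℕ} (h : m ≤ n) :
    padicValNat p (n.choose m) + padicValNat p m ! + padicValNat p (n - m)! =
      padicValNat p n ! := by
  have hchoose : n.choose m ≠ 0 := (Nat.choose_pos h).ne'
  rw [← Nat.choose_mul_factorial_mul_factorial h,
    padicValNat.mul (mul_ne_zero hchoose m.factorial_ne_zero) (n - m).factorial_ne_zero,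
    padicValNat.mul hchoose m.factorial_ne_zero]

lemma padicValNat_choose_of_digit_le {q r : ℕ} (hr : r ≤ q) (hd : d < p) (he : e ≤ d) :
    padicValNat p ((p * q + d).choose (p * r + e)) = padicValNat p (q.choose r) := by
  have hmul : p * r ≤ p * q := Nat.mul_le_mul_left p hr
  have hdiff : p * q + d - (p * r + e) = p * (q - r) + (d - e) := by
    rw [Nat.mul_sub]; omega
  have hlong := padicValNat_choose_add_padicValNat_factorial (p := p)
    (show p * r + e ≤ p * q + d by omega)
  rw [hdiff, padicValNat_factorial_mul_add_digit q hd,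
    padicValNat_factorial_mul_add_digit r (by omega),
    padicValNat_factorial_mul_add_digit (q - r) (by omega)] at hlong
  have hshort := padicValNat_choose_add_padicValNat_factorial (p := p) hr
  omega

lemma padicValNat_choose_of_lt_digit {q r : ℕ} (hr : r ≤ q) (he : e < p) (hde : d < e) :
    padicValNat p ((p * (q + 1) + d).choose (p * r + e)) =
      padicValNat p ((q + 1) * q.choose r) + 1 := by
  have hmul : p * r ≤ p * q := Nat.mul_le_mul_left p hr
  have hdiff : p * (q + 1) + d - (p * r + e) = p * (q - r) + (p + d - e) := by
    rw [Nat.mul_sub, Nat.mul_add_one]; omega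
  have hlong := padicValNat_choose_add_padicValNat_factorial (p := p)
    (show p * r + e ≤ p * (q + 1) + d by rw [Nat.mul_add_one]; omega)
  rw [hdiff, padicValNat_factorial_mul_add_digit (q + 1) (by omega),
    padicValNat_factorial_mul_add_digit r he,
    padicValNat_factorial_mul_add_digit (q - r) (by omega), Nat.factorial_succ,
    padicValNat.mul q.succ_ne_zero q.factorial_ne_zero] at hlong
  have hshort := padicValNat_choose_add_padicValNat_factorial (p := p) hr
  rw [padicValNat.mul q.succ_ne_zero (Nat.choose_pos hr).ne']
  omega

lemma pow_dvd_choose_iff_of_digit_le (k q r : ℕ) (hd : d < p) (he : e ≤ d) :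
    p ^ k ∣ (p * q + d).choose (p * r + e) ↔ p ^ k ∣ q.choose r := by
  rcases le_or_gt r q with hr | hr
  · have hmul : p * r ≤ p * q := Nat.mul_le_mul_left p hr
    rw [padicValNat_dvd_iff_le (Nat.choose_pos (by omega)).ne',
      padicValNat_dvd_iff_le (Nat.choose_pos hr).ne', padicValNat_choose_of_digit_le hr hd he]
  · have hmul : p * (q + 1) ≤ p * r := Nat.mul_le_mul_left p hr
    rw [Nat.mul_add_one] at hmul
    rw [Nat.choose_eq_zero_of_lt hr, Nat.choose_eq_zero_of_lt (by omega)]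

lemma pow_succ_dvd_choose_iff_of_lt_digit (k : ℕ) {q r : ℕ} (hr : r < q) (he : e < p)
    (hde : d < e) :
    p ^ (k + 1) ∣ (p * q + d).choose (p * r + e) ↔ p ^ k ∣ q * (q - 1).choose r := by
  obtain ⟨q, rfl⟩ := Nat.exists_eq_add_one_of_ne_zero (Nat.ne_zero_of_lt hr)
  rw [Nat.lt_add_one_iff] at hr
  have hle : p * r + e ≤ p * (q + 1) + d := by
    have hmul : p * r ≤ p * q := Nat.mul_le_mul_left p hr
    rw [Nat.mul_add_one]; omega
  rw [padicValNat_dvd_iff_le (Nat.choose_pos hle).ne', Nat.add_sub_cancel,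
    padicValNat_dvd_iff_le (mul_ne_zero q.succ_ne_zero (Nat.choose_pos hr).ne'),
    padicValNat_choose_of_lt_digit hr he hde, Nat.add_le_add_iff_right]

end Valuation

section RowCount

lemma sum_range_mul_eq_sum_residues {M : Type*} [AddCommMonoid M] (f : ℕ → M) (b N : ℕ) :
    ∑ m ∈ range (b * N), f m = ∑ e ∈ range b, ∑ r ∈ range N, f (b * r + e) := by
  rw [sum_comm]
  induction N with
  | zero => simp
  | succ N ih => rw [Nat.mul_add_one, sum_range_add, ih, sum_range_succ _ N]

lemma rowCount_eq_card_of_lt (k : ℕ) {n N : ℕ} (h : n < N) :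
    rowCount k n = #{m ∈ range N | ¬ k ∣ n.choose m} := by
  unfold rowCount
  congr 1
  ext m
  simp only [mem_filter, mem_range, and_congr_left_iff]
  intro hdvd
  have hmn : m ≤ n := not_lt.1 fun hlt => hdvd (Nat.choose_eq_zero_of_lt hlt ▸ dvd_zero k)
  omega

lemma rowCount_zero_right {k : ℕ} (hk : k ≠ 1) : rowCount k 0 = 1 := by
  simp [rowCount, filter_singleton, hk]

lemma rowCount_eq_sum_residues (k : ℕ) {n b N : ℕ} (h : n < b * N) :
    rowCount k n = ∑ e ∈ range b, #{r ∈ range N | ¬ k ∣ n.choose (b * r + e)} := by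
  simp only [rowCount_eq_card_of_lt k h, card_filter, sum_range_mul_eq_sum_residues]

/-- The number of `r < q` such that `k` does not divide `q * C(q - 1, r)`. For `k = p ^ j` these
are the `r` for which the entry `C(p q + d, p r + e)`, `d < e < p`, is nonzero modulo
`p ^ (j + 1)`. -/
def borrowRowCount (k q : ℕ) : ℕ :=
  #{r ∈ range q | ¬ k ∣ q * (q - 1).choose r}

lemma borrowRowCount_one (q : ℕ) : borrowRowCount 1 q = 0 := by
  simp [borrowRowCount]

variable {p : ℕ} [Fact p.Prime] {d e : ℕ}

lemma card_residue_of_digit_le (k q : ℕ) (hd : d < p) (he : e ≤ d) :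
    #{r ∈ range (q + 1) | ¬ p ^ k ∣ (p * q + d).choose (p * r + e)} = rowCount (p ^ k) q := by
  simp only [pow_dvd_choose_iff_of_digit_le k q _ hd he, rowCount]

lemma card_residue_of_lt_digit (k q : ℕ) (he : e < p) (hde : d < e) :
    #{r ∈ range (q + 1) | ¬ p ^ (k + 1) ∣ (p * q + d).choose (p * r + e)} =
      borrowRowCount (p ^ k) q := by
  have hlast : (p * q + d).choose (p * q + e) = 0 := Nat.choose_eq_zero_of_lt (by omega)
  rw [range_add_one, filter_insert, if_neg (by simp [hlast]), borrowRowCount]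
  congr 1
  refine filter_congr fun r hr => ?_
  rw [pow_succ_dvd_choose_iff_of_lt_digit k (mem_range.1 hr) he hde]

lemma rowCount_pow_succ_mul_add (k q : ℕ) (hd : d < p) :
    rowCount (p ^ (k + 1)) (p * q + d) =
      (d + 1) * rowCount (p ^ (k + 1)) q + (p - 1 - d) * borrowRowCount (p ^ k) q := by
  have hlt : p * q + d < p * (q + 1) := by rw [Nat.mul_add_one]; omega
  rw [rowCount_eq_sum_residues _ hlt, ← sum_range_add_sum_Ico _ (Nat.succ_le_of_lt hd)]
  congr 1
  · rw [sum_congr rfl fun e he =>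
      card_residue_of_digit_le (k + 1) q hd (Nat.lt_add_one_iff.1 (mem_range.1 he))]
    simp
  · rw [sum_congr rfl fun e he =>
      card_residue_of_lt_digit k q (mem_Ico.1 he).2 (Nat.lt_of_succ_le (mem_Ico.1 he).1)]
    simp [Nat.sub_sub, Nat.add_comm]

lemma rowCount_prime_mul_add (q : ℕ) (hd : d < p) :
    rowCount p (p * q + d) = (d + 1) * rowCount p q := by
  simpa [borrowRowCount_one] using rowCount_pow_succ_mul_add 0 q hd

lemma borrowRowCount_prime_eq_ite (q : ℕ) :
    borrowRowCount p q = if p ∣ q then 0 else rowCount p (q - 1) := by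
  split_ifs with h
  · simp [borrowRowCount, h.mul_right]
  · have hq : q ≠ 0 := fun hq => h (hq ▸ dvd_zero p)
    simp only [borrowRowCount, (Fact.out : p.Prime).dvd_mul, h, false_or,
      rowCount_eq_card_of_lt p (Nat.sub_one_lt hq)]

lemma mod_add_one_mul_borrowRowCount (q : ℕ) :
    (q % p + 1) * borrowRowCount p q = q % p * rowCount p q := by
  have hlt : q % p < p := Nat.mod_lt q (Fact.out : p.Prime).pos
  have hdiv := Nat.div_add_mod q p
  rw [borrowRowCount_prime_eq_ite]
  split_ifs with h
  · simp [Nat.mod_eq_zero_of_dvd h]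
  · have hpos : 0 < q % p := Nat.pos_of_ne_zero fun h0 => h (Nat.dvd_of_mod_eq_zero h0)
    have hrow := rowCount_prime_mul_add (p := p) (q / p) hlt
    have hpred := rowCount_prime_mul_add (p := p) (q / p) (d := q % p - 1) (by omega)
    rw [hdiv] at hrow
    rw [show p * (q / p) + (q % p - 1) = q - 1 by omega, Nat.sub_add_cancel hpos] at hpred
    rw [hrow, hpred]
    ring

end RowCount

section Subwords

variable {α : Type*}

lemma concat_suffix_concat_iff {v l : List α} {x a : α} :
    v ++ [x] <:+ l ++ [a] ↔ v <:+ l ∧ a = x := by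
  simp [List.suffix_concat_iff, and_comm, eq_comm (a := a)]

lemma card_occurrences_concat [DecidableEq α] (l : List α) (a : α) (w : List α) :
    #{s ∈ range ((l ++ [a]).length + 1 - w.length) | ((l ++ [a]).drop s).take w.length = w} =
      #{s ∈ range (l.length + 1 - w.length) | (l.drop s).take w.length = w} +
        if w <:+ l ++ [a] then 1 else 0 := by
  rcases lt_or_ge (l.length + 1) w.length with hlong | hshort
  · have hsuffix : ¬ w <:+ l ++ [a] := fun h => by
      have hle := h.length_le
      rw [List.length_append, List.length_singleton] at hle
      omega
    simp [hsuffix, Nat.sub_eq_zero_of_le hlong.le, Nat.sub_eq_zero_of_le hlong]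
  have hlength : (l ++ [a]).length + 1 - w.length = l.length + 1 - w.length + 1 := by
    rw [List.length_append, List.length_singleton]
    omega
  have hlast : ((l ++ [a]).drop (l.length + 1 - w.length)).take w.length = w ↔
      w <:+ l ++ [a] := by
    rw [List.take_of_length_le (by grind), List.suffix_iff_eq_drop, eq_comm,
      List.length_append, List.length_singleton]
  simp only [hlength, card_filter, sum_range_succ, hlast]
  congr 1
  refine sum_congr rfl fun s hs => ?_
  rw [mem_range] at hs
  rw [List.drop_append_of_le_length (by omega), List.take_append_of_le_length (by grind)]

variable {b : ℕ}

lemma wordOf_mul_add (hb : 1 < b) {q d : ℕ} (hd : d < b) (h : b * q + d ≠ 0) :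
    wordOf b (b * q + d) = wordOf b q ++ [d] := by
  have hne : d ≠ 0 ∨ q ≠ 0 := by
    by_contra! h0
    simp [h0] at h
  rw [wordOf, add_comm, Nat.digits_add b hb d q hd hne, List.reverse_cons, wordOf]

lemma subwordCount_mul_add (hb : 1 < b) {q d : ℕ} (hd : d < b) (h : b * q + d ≠ 0)
    (w : List ℕ) :
    subwordCount b (b * q + d) w =
      subwordCount b q w + if w <:+ wordOf b q ++ [d] then 1 else 0 := by
  simp only [subwordCount, wordOf_mul_add hb hd h, card_occurrences_concat]

lemma singleton_suffix_wordOf_iff (hb : 1 < b) (q : ℕ) {x : ℕ} (hx : x ≠ 0) :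
    [x] <:+ wordOf b q ↔ q % b = x := by
  rcases eq_or_ne q 0 with rfl | hq
  · simp [wordOf, hx.symm]
  · have hdiv := Nat.div_add_mod q b
    have hword := wordOf_mul_add hb (q := q / b) (Nat.mod_lt q (by omega)) (by rwa [hdiv])
    rw [hdiv] at hword
    simp [hword, eq_comm]

lemma subwordCount_mul_add_singleton (hb : 1 < b) {q d : ℕ} (hd : d < b) (h : b * q + d ≠ 0)
    (x : ℕ) :
    subwordCount b (b * q + d) [x] = subwordCount b q [x] + if d = x then 1 else 0 := by
  have hsuffix : [x] <:+ wordOf b q ++ [d] ↔ d = x := by simp [eq_comm]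
  simp only [subwordCount_mul_add hb hd h, hsuffix]

lemma subwordCount_mul_add_pair (hb : 1 < b) {q d : ℕ} (hd : d < b) (h : b * q + d ≠ 0)
    {x : ℕ} (hx : x ≠ 0) (y : ℕ) :
    subwordCount b (b * q + d) [x, y] =
      subwordCount b q [x, y] + if q % b = x ∧ d = y then 1 else 0 := by
  have hsuffix : [x, y] <:+ wordOf b q ++ [d] ↔ q % b = x ∧ d = y := by
    rw [← singleton_suffix_wordOf_iff hb q hx]
    exact concat_suffix_concat_iff (v := [x])
  simp only [subwordCount_mul_add hb hd h, hsuffix]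

lemma induction_on_digits {P : ℕ → Prop} (hb : 1 < b) (zero : P 0)
    (mul_add : ∀ q d, d < b → b * q + d ≠ 0 → P q → P (b * q + d)) (n : ℕ) : P n := by
  induction n using Nat.strong_induction_on with
  | _ n ih =>
    rcases eq_or_ne n 0 with rfl | hn
    · exact zero
    · rw [← Nat.div_add_mod n b]
      exact mul_add _ _ (Nat.mod_lt n (by omega)) (by rwa [Nat.div_add_mod])
        (ih _ (Nat.div_lt_self (Nat.pos_of_ne_zero hn) hb))

end Subwords

section Formula

lemma cword_pair (b x y : ℕ) :
    cword b [x, y] = (x : ℚ) / (x + 1) * ((b - y - 1) / (y + 1)) := by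
  simp [cword]

/-- The total weight `∑ c(xy) |n|_{xy}` of the two-letter subwords of `n` in base `b`. -/
def pairWeight (b n : ℕ) : ℚ :=
  ∑ x ∈ range b, ∑ y ∈ range b, cword b [x, y] * subwordCount b n [x, y]

lemma pairWeight_zero (b : ℕ) : pairWeight b 0 = 0 := by
  simp [pairWeight, subwordCount, wordOf]

lemma pairWeight_mul_add {b : ℕ} (hb : 1 < b) {q d : ℕ} (hd : d < b) (h : b * q + d ≠ 0) :
    pairWeight b (b * q + d) = pairWeight b q + cword b [q % b, d] := by
  have hterm (x y : ℕ) : cword b [x, y] * subwordCount b (b * q + d) [x, y] =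
      cword b [x, y] * subwordCount b q [x, y] +
        if q % b = x then (if d = y then cword b [x, y] else 0) else 0 := by
    rcases eq_or_ne x 0 with rfl | hx
    · -- For `q = 0` no subword is created although `q % b = 0`, but the weight of `0 y` vanishes.
      simp [cword_pair]
    · rw [subwordCount_mul_add_pair hb hd h hx]
      split_ifs <;> simp_all [mul_add]
  simp only [pairWeight, hterm, sum_add_distrib, add_right_inj]
  rw [sum_comm]
  simp [Nat.mod_lt q (show 0 < b by omega), hd]

variable {p : ℕ} [Fact p.Prime]

lemma rowCount_prime_eq_prod (n : ℕ) :
    rowCount p n = ∏ x ∈ range p, (x + 1) ^ subwordCount p n [x] := by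
  have hp : p.Prime := Fact.out
  induction n using induction_on_digits hp.one_lt with
  | zero => simp [rowCount_zero_right hp.ne_one, subwordCount, wordOf]
  | mul_add q d hd hn ih =>
    simp only [subwordCount_mul_add_singleton hp.one_lt hd hn, pow_add, prod_mul_distrib, ← ih,
      prod_pow_boole, mem_range, if_pos hd]
    rw [rowCount_prime_mul_add q hd, mul_comm]

lemma rowCount_prime_sq_mul_add (q : ℕ) {d : ℕ} (hd : d < p) :
    (rowCount (p ^ 2) (p * q + d) : ℚ) =
      (d + 1) * (rowCount (p ^ 2) q + rowCount p q * cword p [q % p, d]) := by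
  have hborrow : (borrowRowCount p q : ℚ) = (q % p : ℕ) / ((q % p : ℕ) + 1) * rowCount p q := by
    have hmul := mod_add_one_mul_borrowRowCount (p := p) q
    rw [mul_comm] at hmul
    field_simp
    exact_mod_cast hmul
  have hcast : ((p - 1 - d : ℕ) : ℚ) = p - d - 1 := by
    rw [Nat.sub_sub, Nat.cast_sub (by omega)]
    push_cast
    ring
  have hrow := rowCount_pow_succ_mul_add 1 q hd
  rw [pow_one] at hrow
  rw [hrow, cword_pair]
  push_cast [hcast, hborrow]
  field_simp

lemma rowCount_prime_sq_eq_mul_pairWeight (n : ℕ) :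
    (rowCount (p ^ 2) n : ℚ) = rowCount p n * (1 + pairWeight p n) := by
  have hp : p.Prime := Fact.out
  induction n using induction_on_digits hp.one_lt with
  | zero => simp [rowCount_zero_right, pairWeight_zero, hp.ne_one]
  | mul_add q d hd hn ih =>
    rw [rowCount_prime_sq_mul_add q hd, ih, pairWeight_mul_add hp.one_lt hd hn,
      rowCount_prime_mul_add q hd]
    push_cast
    ring

end Formula

theorem stmt15_general (p : ℕ) [Fact p.Prime] (n : ℕ) :
    (rowCount (p ^ 2) n : ℚ) =
      (∏ x ∈ range p, ((x : ℚ) + 1) ^ subwordCount p n [x]) *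
        (1 + ∑ x ∈ range p, ∑ y ∈ range p, cword p [x, y] * subwordCount p n [x, y]) := by
  rw [rowCount_prime_sq_eq_mul_pairWeight, rowCount_prime_eq_prod, pairWeight]
  push_cast
  rfl

/-- For every `n ≥ 0`, as an identity in the rational numbers, the formula for `a_{25}(n)` in
terms of base-5 subword counts. -/
theorem stmt15 (n : ℕ) :
    (rowCount 25 n : ℚ) =
      2 ^ subwordCount 5 n [1] * 3 ^ subwordCount 5 n [2] * 4 ^ subwordCount 5 n [3] *
        5 ^ subwordCount 5 n [4] *
        (1 + 2 * (subwordCount 5 n [1, 0] : ℚ) + (3 / 4) * (subwordCount 5 n [1, 1] : ℚ) +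
          (1 / 3) * (subwordCount 5 n [1, 2] : ℚ) + (1 / 8) * (subwordCount 5 n [1, 3] : ℚ) +
          (8 / 3) * (subwordCount 5 n [2, 0] : ℚ) + (subwordCount 5 n [2, 1] : ℚ) +
          (4 / 9) * (subwordCount 5 n [2, 2] : ℚ) + (1 / 6) * (subwordCount 5 n [2, 3] : ℚ) +
          3 * (subwordCount 5 n [3, 0] : ℚ) + (9 / 8) * (subwordCount 5 n [3, 1] : ℚ) +
          (1 / 2) * (subwordCount 5 n [3, 2] : ℚ) + (3 / 16) * (subwordCount 5 n [3, 3] : ℚ) +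
          (16 / 5) * (subwordCount 5 n [4, 0] : ℚ) + (6 / 5) * (subwordCount 5 n [4, 1] : ℚ) +
          (8 / 15) * (subwordCount 5 n [4, 2] : ℚ) + (1 / 5) * (subwordCount 5 n [4, 3] : ℚ)) := by
  have : Fact (Nat.Prime 5) := ⟨Nat.prime_five⟩
  rw [show 25 = 5 ^ 2 by rfl, stmt15_general 5 n]
  norm_num [prod_range_succ, sum_range_succ, cword_pair]
  ring
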